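/- arXiv:1701.05726 — 3 statements merged into one kernel-verified Lean document; each statement's English description precedes it below -/
import Mathlib

section
/- Let Ω ⊆ ℂ be a simply connected domain, f : Ω → ℂ a continuous open map, and let α : [0,1] → f(Ω) be an arc (injective path). Suppose β₁, β₂ : [0,1] → Ω are continuous maps with f ∘ β₁ = α = f ∘ β₂, β₁(0) = β₂(0), and β₁(1) = β₂(1). Then β₁ = β₂. -/
/-!
If the lifts differ somewhere, restrict them to a maximal interval on whose interior they differ.
As `α` is injective, the restricted lifts `γ₁`, `γ₂` meet only at their common endpoints `P ≠ Q`.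

Let `U` be the set of points about which the closed curve formed by `γ₁` and `γ₂` has nonzero
winding number. It is open and bounded, lies in `Ω` since `Ω` is simply connected, and its frontier
lies on the curve. It is nonempty: the variation of `log (γᵢ s - z)` along `γᵢ` is a continuous
logarithm of `(Q - z) / (P - z)` for `z` off `γᵢ`, and if these agreed wherever both are defined,
they would glue to a logarithm on `ℂ \ {P, Q}`, which does not exist on a small circle about `Q`.

So `f(U)` is a nonempty bounded open set whose frontier lies on the arc `α`. For `p ∈ f(U)` off the
arc, a logarithm of `z - p` on the arc extends to the plane by Tietze's theorem. Replacing `z - p`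
on `f(U)` by the exponential of this extension yields a zero-free function on the plane that equals
`z - p` on a large circle, where it has no logarithm. Hence `f(U)` is contained in the arc, which
is absurd because an arc has empty interior.
-/

open Set Metric Topology Function unitInterval

section Logarithm

variable {X : Type*} [TopologicalSpace X]

lemma sub_eq_sub_of_exp_eq [PreconnectedSpace X] {u v : X → ℂ} (hu : Continuous u)
    (hv : Continuous v) (h : ∀ x, Complex.exp (u x) = Complex.exp (v x)) (x y : X) :
    u x - u y = v x - v y := by
  have heq : (fun x ↦ u x - u y) = fun x ↦ v x - v y :=
    Complex.isCoveringMap_exp.eq_of_comp_eq (by fun_prop) (by fun_prop)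
      (funext fun x ↦ Subtype.ext (by simp only [comp_apply, Complex.exp_sub, h])) y (by simp)
  exact congrFun heq x

lemma exists_continuousMap_exp_eq [SimplyConnectedSpace X] [LocallyPathConnectedSpace X]
    (g : C(X, ℂ)) (hg : ∀ x, g x ≠ 0) : ∃ l : C(X, ℂ), ∀ x, Complex.exp (l x) = g x := by
  obtain ⟨x₀⟩ : Nonempty X := inferInstance
  obtain ⟨l, ⟨-, hl⟩, -⟩ := Complex.isCoveringMapOn_exp.existsUnique_continuousMap_lifts g
    (Complex.exp_log (hg x₀)) hg
  exact ⟨l, congrFun hl⟩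

instance simplyConnectedSpace_unitInterval : SimplyConnectedSpace I :=
  have : ContractibleSpace I := (convex_Icc (0 : ℝ) 1).contractibleSpace ⟨0, unitInterval.zero_mem⟩
  .ofContractible I

instance locallyPathConnectedSpace_unitInterval : LocallyPathConnectedSpace I :=
  (convex_Icc (0 : ℝ) 1).locallyPathConnectedSpace

lemma exists_mem_sphere_exp_ne {c : ℂ} {r : ℝ} (hr : 0 ≤ r) {g : ℂ → ℂ}
    (hg : ContinuousOn g (sphere c r)) : ∃ z ∈ sphere c r, Complex.exp (g z) ≠ z - c := by
  by_contra! hexp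
  have hmem : ∀ t, circleMap c r t ∈ sphere c r := circleMap_mem_sphere c hr
  have hvariation := sub_eq_sub_of_exp_eq
    (u := fun t ↦ g (circleMap c r t)) (v := fun t : ℝ ↦ t * Complex.I + g (circleMap c r 0))
    (hg.comp_continuous (continuous_circleMap c r) hmem) (by fun_prop)
    (fun t ↦ by
      rw [Complex.exp_add, hexp _ (hmem t), hexp _ (hmem 0)]
      simp [circleMap, mul_comm]) (2 * Real.pi) 0
  have hperiod : circleMap c r (2 * Real.pi) = circleMap c r 0 := (periodic_circleMap c r).eq
  simp [hperiod] at hvariation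

lemma exists_mem_frontier_exp_ne {W : Set ℂ} (hW : Bornology.IsBounded W) {p : ℂ} (hp : p ∈ W)
    {g : ℂ → ℂ} (hg : Continuous g) : ∃ z ∈ frontier W, Complex.exp (g z) ≠ z - p := by
  classical
  by_contra! hexp
  let h : C(ℂ, ℂ) :=
    ⟨fun z ↦ if z ∈ W then Complex.exp (g z) else z - p,
      Continuous.if hexp (by fun_prop) (by fun_prop)⟩
  have h_ne_zero : ∀ z, h z ≠ 0 := fun z ↦ by
    by_cases hz : z ∈ W
    · simp [h, hz]
    · simpa [h, hz, sub_eq_zero] using (ne_of_mem_of_not_mem hp hz).symm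
  obtain ⟨l, hl⟩ := exists_continuousMap_exp_eq h h_ne_zero
  obtain ⟨R, hR, hWR⟩ := hW.subset_ball_lt 0 p
  obtain ⟨z, hz, hne⟩ := exists_mem_sphere_exp_ne (c := p) hR.le l.continuous.continuousOn
  have hzW : z ∉ W := fun hzW ↦ (mem_ball.mp (hWR hzW)).ne hz
  exact hne (by simp [hl, h, hzW])

lemma subset_range_of_frontier_subset_range [SimplyConnectedSpace X] [LocallyPathConnectedSpace X]
    {α : X → ℂ} (hα : IsClosedEmbedding α) {W : Set ℂ} (hW : Bornology.IsBounded W)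
    (hfr : frontier W ⊆ range α) : W ⊆ range α := by
  intro p hp
  by_contra hpα
  obtain ⟨l, hl⟩ := exists_continuousMap_exp_eq ⟨fun x ↦ α x - p, by fun_prop⟩
    fun x hx ↦ hpα ⟨x, sub_eq_zero.mp hx⟩
  obtain ⟨g, hg⟩ := ContinuousMap.exists_extension' hα l
  obtain ⟨z, hz, hne⟩ := exists_mem_frontier_exp_ne hW hp g.continuous
  obtain ⟨x, rfl⟩ := hfr hz
  exact hne ((congrArg Complex.exp (congrFun hg x)).trans (hl x))

end Logarithm

lemma exists_eq_apply_add_of_periodic {φ : ℝ → ℝ} {c : ℝ} (hφ : Continuous φ)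
    (hper : Periodic φ (2 * c)) : ∃ t, φ t = φ (t + c) := by
  let δ : ℝ → ℝ := fun t ↦ φ t - φ (t + c)
  have hδ : Continuous δ := by fun_prop
  have hδc : δ c = -δ 0 := by simp [δ, ← two_mul, hper.eq]
  have hzero : (0 : ℝ) ∈ range δ := by
    rcases le_total (δ 0) 0 with h | h
    · exact mem_range_of_exists_le_of_exists_ge hδ ⟨0, h⟩ ⟨c, by linarith⟩
    · exact mem_range_of_exists_le_of_exists_ge hδ ⟨c, by linarith⟩ ⟨0, h⟩
  obtain ⟨t, ht⟩ := hzero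
  exact ⟨t, sub_eq_zero.mp ht⟩

lemma not_injective_of_continuous_sphere {c : ℂ} {r : ℝ} (hr : 0 < r) {g : sphere c r → ℝ}
    (hg : Continuous g) : ¬ Injective g := by
  intro hinj
  let κ : ℝ → sphere c r := fun t ↦ ⟨circleMap c r t, circleMap_mem_sphere c hr.le t⟩
  have hκ : Continuous κ := (continuous_circleMap c r).subtype_mk _
  have hper : Periodic (g ∘ κ) (2 * Real.pi) := fun t ↦
    congrArg g (Subtype.ext (periodic_circleMap c r t))
  obtain ⟨t, ht⟩ := exists_eq_apply_add_of_periodic (hg.comp hκ) hper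
  have hantipodal : circleMap c r t = circleMap c r (t + Real.pi) := congrArg Subtype.val (hinj ht)
  have hradius : circleMap 0 r t = 0 := by
    simp only [circleMap, Complex.ofReal_add, add_mul, Complex.exp_add,
      Complex.exp_pi_mul_I] at hantipodal ⊢
    linear_combination hantipodal / 2
  exact circleMap_ne_center hr.ne' hradius

lemma interior_range_eq_empty_of_isEmbedding {K : Set ℝ} {α : K → ℂ} (hα : IsEmbedding α) :
    interior (range α) = ∅ := by
  by_contra! hne
  obtain ⟨p, hp⟩ := hne
  obtain ⟨r, hr, hball⟩ := nhds_basis_closedBall.mem_iff.mp (mem_interior_iff_mem_nhds.mp hp)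
  have hsphere : sphere p r ⊆ range α := sphere_subset_closedBall.trans hball
  refine not_injective_of_continuous_sphere hr
    (g := fun z ↦ (hα.toHomeomorph.symm (inclusion hsphere z) : ℝ)) ?_ ?_
  · exact continuous_subtype_val.comp
      (hα.toHomeomorph.symm.continuous.comp (continuous_inclusion hsphere))
  · exact Subtype.val_injective.comp
      (hα.toHomeomorph.symm.injective.comp (inclusion_injective hsphere))

lemma frontier_image_subset_image_frontier {X Y : Type*} [TopologicalSpace X]
    [TopologicalSpace Y] [T2Space Y] {f : X → Y} {U : Set X} (hU : IsCompact (closure U))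
    (hf : ContinuousOn f (closure U)) (hfU : IsOpen (f '' U)) :
    frontier (f '' U) ⊆ f '' frontier U := by
  rw [hfU.frontier_eq]
  rintro w ⟨hw, hwU⟩
  obtain ⟨z, hz, rfl⟩ :=
    closure_minimal (image_mono subset_closure) (hU.image_of_continuousOn hf).isClosed hw
  exact ⟨z, ⟨hz, fun h ↦ hwU ⟨z, interior_subset h, rfl⟩⟩, rfl⟩

lemma not_isOpen_image_of_mapsTo_frontier_arc {α : I → ℂ} (hα : Continuous α)
    (hinj : Injective α) {U : Set ℂ} (hne : U.Nonempty) (hU : Bornology.IsBounded U) {f : ℂ → ℂ}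
    (hf : ContinuousOn f (closure U)) (hfr : MapsTo f (frontier U) (range α)) :
    ¬ IsOpen (f '' U) := by
  intro hfU
  have hemb : IsClosedEmbedding α := hα.isClosedEmbedding hinj
  have hbdd : Bornology.IsBounded (f '' U) :=
    (hU.isCompact_closure.image_of_continuousOn hf).isBounded.subset (image_mono subset_closure)
  have hsub : f '' U ⊆ range α := subset_range_of_frontier_subset_range hemb hbdd <|
    (frontier_image_subset_image_frontier hU.isCompact_closure hf hfU).trans hfr.image_subset
  have hint : f '' U ⊆ interior (range α) := interior_maximal hsub hfU
  rw [interior_range_eq_empty_of_isEmbedding hemb.isEmbedding, subset_empty_iff] at hint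
  exact (hne.image f).ne_empty hint

lemma div_sub_mem_slitPlane {w z z₀ : ℂ} (h : dist z z₀ < dist w z₀) :
    (w - z) / (w - z₀) ∈ Complex.slitPlane := by
  have hpos : 0 < ‖w - z₀‖ := by
    rw [← dist_eq_norm]
    exact dist_nonneg.trans_lt h
  have hsplit : (w - z) / (w - z₀) = 1 + (z₀ - z) / (w - z₀) := by
    field_simp [norm_pos_iff.mp hpos]
    ring
  rw [hsplit]
  apply Complex.mem_slitPlane_of_norm_lt_one
  rwa [norm_div, div_lt_one hpos, ← dist_eq_norm, ← dist_eq_norm, dist_comm]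

section EnclosedSet

open Classical in
/-- The variation along `γ` of a continuous branch of `log (γ s - z)`; for a closed path it is
`2πi` times the winding number about `z`. It has the junk value `0` for `z` on the path. -/
noncomputable def logVariation {P Q : ℂ} (γ : Path P Q) (z : ℂ) : ℂ :=
  if h : ∃ l : C(I, ℂ), ∀ s, Complex.exp (l s) = γ s - z then h.choose 1 - h.choose 0 else 0

variable {P Q z₀ z : ℂ} {γ γ₁ γ₂ : Path P Q}

lemma logVariation_eq_of_exp_eq {l : I → ℂ} (hl : Continuous l)
    (hexp : ∀ s, Complex.exp (l s) = γ s - z) : logVariation γ z = l 1 - l 0 := by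
  have h : ∃ l : C(I, ℂ), ∀ s, Complex.exp (l s) = γ s - z := ⟨⟨l, hl⟩, hexp⟩
  rw [logVariation, dif_pos h]
  exact sub_eq_sub_of_exp_eq h.choose.continuous hl
    (fun s ↦ (h.choose_spec s).trans (hexp s).symm) 1 0

lemma exists_continuousMap_exp_eq_path_sub (hz : z ∉ range γ) :
    ∃ l : C(I, ℂ), ∀ s, Complex.exp (l s) = γ s - z :=
  exists_continuousMap_exp_eq ⟨fun s ↦ γ s - z, by fun_prop⟩
    fun s hs ↦ hz ⟨s, sub_eq_zero.mp hs⟩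

lemma exp_logVariation (hz : z ∉ range γ) :
    Complex.exp (logVariation γ z) = (Q - z) / (P - z) := by
  obtain ⟨l, hl⟩ := exists_continuousMap_exp_eq_path_sub hz
  rw [logVariation_eq_of_exp_eq l.continuous hl, Complex.exp_sub, hl, hl, γ.target, γ.source]

lemma eventually_logVariation_eq (hz₀ : z₀ ∉ range γ) :
    ∀ᶠ z in 𝓝 z₀, logVariation γ z = logVariation γ z₀ +
      (Complex.log ((Q - z) / (Q - z₀)) - Complex.log ((P - z) / (P - z₀))) := by
  obtain ⟨ε, hε, hball⟩ := Metric.mem_nhds_iff.mp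
    ((isCompact_range γ.continuous).isClosed.isOpen_compl.mem_nhds hz₀)
  obtain ⟨l, hl⟩ := exists_continuousMap_exp_eq_path_sub hz₀
  filter_upwards [ball_mem_nhds z₀ hε] with z hz
  have hslit : ∀ s, (γ s - z) / (γ s - z₀) ∈ Complex.slitPlane := fun s ↦
    div_sub_mem_slitPlane <| (mem_ball.mp hz).trans_le <|
      not_lt.mp fun hs ↦ hball (mem_ball.mpr hs) ⟨s, rfl⟩
  have hne : ∀ s, γ s - z₀ ≠ 0 := fun s hs ↦ hz₀ ⟨s, sub_eq_zero.mp hs⟩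
  rw [logVariation_eq_of_exp_eq l.continuous hl,
    logVariation_eq_of_exp_eq (l := fun s ↦ l s + Complex.log ((γ s - z) / (γ s - z₀)))]
  · simp only [γ.source, γ.target]
    ring
  · exact l.continuous.add (Continuous.clog
      (.div (by fun_prop) (by fun_prop) hne) hslit)
  · intro s
    rw [Complex.exp_add, hl, Complex.exp_log (Complex.slitPlane_ne_zero (hslit s)),
      mul_div_cancel₀ _ (hne s)]

lemma continuousAt_logVariation (hz₀ : z₀ ∉ range γ) : ContinuousAt (logVariation γ) z₀ := by
  have hlog : ∀ w ∈ range γ, ContinuousAt (fun z ↦ Complex.log ((w - z) / (w - z₀))) z₀ := by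
    intro w hw
    have hne : w - z₀ ≠ 0 := sub_ne_zero.mpr (ne_of_mem_of_not_mem hw hz₀)
    exact ContinuousAt.clog (by fun_prop) (by simp [hne])
  have hlocal := eventually_logVariation_eq hz₀
  exact (continuousAt_const.add ((hlog Q γ.target_mem_range).sub
    (hlog P γ.source_mem_range))).congr (hlocal.mono fun _ h ↦ h.symm)

/-- The set of points off the two paths about which the closed path `γ₁` followed by the reverse
of `γ₂` has nonzero winding number. -/
def enclosedSet (γ₁ γ₂ : Path P Q) : Set ℂ :=
  {z | z ∉ range γ₁ ∪ range γ₂ ∧ logVariation γ₁ z ≠ logVariation γ₂ z}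

lemma eventually_mem_enclosedSet_iff (hz₀ : z₀ ∉ range γ₁ ∪ range γ₂) :
    ∀ᶠ z in 𝓝 z₀, z ∈ enclosedSet γ₁ γ₂ ↔ z₀ ∈ enclosedSet γ₁ γ₂ := by
  have hclosed : IsClosed (range γ₁ ∪ range γ₂) :=
    ((isCompact_range γ₁.continuous).union (isCompact_range γ₂.continuous)).isClosed
  filter_upwards [hclosed.isOpen_compl.mem_nhds hz₀,
    eventually_logVariation_eq fun h ↦ hz₀ (.inl h),
    eventually_logVariation_eq fun h ↦ hz₀ (.inr h)] with z hz h₁ h₂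
  simp only [enclosedSet, mem_ofPred_eq, h₁, h₂, ne_eq, add_left_inj]
  exact and_congr_left' (iff_of_true hz hz₀)

lemma isOpen_enclosedSet : IsOpen (enclosedSet γ₁ γ₂) :=
  isOpen_iff_mem_nhds.mpr fun _ hz ↦
    (eventually_mem_enclosedSet_iff hz.1).mono fun _ h ↦ h.mpr hz

lemma frontier_enclosedSet_subset : frontier (enclosedSet γ₁ γ₂) ⊆ range γ₁ ∪ range γ₂ := by
  intro z hz
  by_contra hzJ
  rw [isOpen_enclosedSet.frontier_eq] at hz
  obtain ⟨w, hw, hiff⟩ := ((mem_closure_iff_frequently.mp hz.1).and_eventually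
    (eventually_mem_enclosedSet_iff hzJ)).exists
  exact hz.2 (hiff.mp hw)

lemma enclosedSet_subset {S : Set ℂ} (hS : IsOpen S) (hSsc : IsSimplyConnected S)
    (h : range γ₁ ∪ range γ₂ ⊆ S) : enclosedSet γ₁ γ₂ ⊆ S := by
  rintro z ⟨-, hne⟩
  by_contra hz
  obtain ⟨L, hL, hexp⟩ := Complex.exists_continuousOn_eqOn_exp_comp hSsc hS (g := (· - z))
    (by fun_prop) fun ⟨w, hw, hwz⟩ ↦ hz (sub_eq_zero.mp hwz ▸ hw)
  have hvariation : ∀ γ : Path P Q, range γ ⊆ S → logVariation γ z = L Q - L P := by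
    intro γ hγ
    rw [range_subset_iff] at hγ
    rw [logVariation_eq_of_exp_eq (hL.comp_continuous γ.continuous hγ) fun s ↦ hexp (hγ s),
      comp_apply, comp_apply, γ.target, γ.source]
  exact hne ((hvariation γ₁ (subset_union_left.trans h)).trans
    (hvariation γ₂ (subset_union_right.trans h)).symm)

lemma isBounded_enclosedSet : Bornology.IsBounded (enclosedSet γ₁ γ₂) := by
  obtain ⟨R, hR, hsub⟩ := ((isCompact_range γ₁.continuous).union
    (isCompact_range γ₂.continuous)).isBounded.subset_ball_lt 0 0
  have := contractibleSpace_ball (x := (0 : ℂ)) hR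
  exact isBounded_ball.subset
    (enclosedSet_subset isOpen_ball (SimplyConnectedSpace.ofContractible _) hsub)

lemma exists_notMem_pair_exp_ne (hPQ : P ≠ Q) {G : ℂ → ℂ} (hG : ContinuousOn G {P, Q}ᶜ) :
    ∃ z ∉ ({P, Q} : Set ℂ), Complex.exp (G z) ≠ (Q - z) / (P - z) := by
  by_contra! hexp
  have hd : 0 < dist P Q := dist_pos.mpr hPQ
  have hsphere : ∀ z ∈ sphere Q (dist P Q / 2), z ∉ ({P, Q} : Set ℂ) := by
    rintro z hz (rfl | rfl) <;> simp only [mem_sphere, dist_self] at hz <;> linarith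
  have hslit : ∀ z ∈ sphere Q (dist P Q / 2), (P - z) / (P - Q) ∈ Complex.slitPlane :=
    fun z hz ↦ div_sub_mem_slitPlane ((mem_sphere.mp hz).trans_lt (half_lt_self hd))
  obtain ⟨z, hz, hne⟩ := exists_mem_sphere_exp_ne (c := Q) (half_pos hd).le
    (g := fun z ↦ G z + Complex.log ((P - z) / (P - Q)) + Complex.log (Q - P))
    (((hG.mono hsphere).add (ContinuousOn.clog (by fun_prop) hslit)).add continuousOn_const)
  apply hne
  have hPz : P - z ≠ 0 := sub_ne_zero.mpr fun h ↦ hsphere z hz (.inl h.symm)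
  have hPQ_sub : P - Q ≠ 0 := sub_ne_zero.mpr hPQ
  rw [Complex.exp_add, Complex.exp_add, hexp z (hsphere z hz),
    Complex.exp_log (Complex.slitPlane_ne_zero (hslit z hz)),
    Complex.exp_log (sub_ne_zero.mpr hPQ.symm)]
  field_simp
  ring

lemma exists_continuousOn_exp_eq_of_enclosedSet_eq_empty
    (hinter : range γ₁ ∩ range γ₂ ⊆ {P, Q}) (hempty : enclosedSet γ₁ γ₂ = ∅) :
    ∃ G : ℂ → ℂ, ContinuousOn G {P, Q}ᶜ ∧
      ∀ z ∉ ({P, Q} : Set ℂ), Complex.exp (G z) = (Q - z) / (P - z) := by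
  classical
  let G : ℂ → ℂ := (range γ₁).piecewise (logVariation γ₂) (logVariation γ₁)
  have hG₁ : EqOn G (logVariation γ₁) (range γ₁)ᶜ := piecewise_eqOn_compl _ _ _
  have hG₂ : EqOn G (logVariation γ₂) (range γ₂)ᶜ := by
    intro z hz₂
    by_cases hz₁ : z ∈ range γ₁
    · exact piecewise_eq_of_mem _ _ _ hz₁
    · rw [hG₁ hz₁]
      by_contra hne
      exact (hempty.subset ⟨by simp_all, hne⟩ : z ∈ (∅ : Set ℂ))
  have hcover : ∀ z ∉ ({P, Q} : Set ℂ), ∃ γ : Path P Q,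
      z ∉ range γ ∧ EqOn G (logVariation γ) (range γ)ᶜ := by
    intro z hz
    by_cases hz₁ : z ∈ range γ₁
    · exact ⟨γ₂, fun hz₂ ↦ hz (hinter ⟨hz₁, hz₂⟩), hG₂⟩
    · exact ⟨γ₁, hz₁, hG₁⟩
  refine ⟨G, fun z hz ↦ ?_, fun z hz ↦ ?_⟩ <;> obtain ⟨γ, hzγ, hGγ⟩ := hcover z hz
  · have hnhds := (isCompact_range γ.continuous).isClosed.isOpen_compl.mem_nhds hzγ
    exact ((continuousAt_logVariation hzγ).congr
      (hGγ.eventuallyEq_of_mem hnhds).symm).continuousWithinAt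
  · rw [hGγ hzγ, exp_logVariation hzγ]

lemma enclosedSet_nonempty (hPQ : P ≠ Q) (hinter : range γ₁ ∩ range γ₂ ⊆ {P, Q}) :
    (enclosedSet γ₁ γ₂).Nonempty := by
  by_contra! hempty
  obtain ⟨G, hG, hexp⟩ := exists_continuousOn_exp_eq_of_enclosedSet_eq_empty hinter hempty
  obtain ⟨z, hz, hne⟩ := exists_notMem_pair_exp_ne hPQ hG
  exact hne (hexp z hz)

end EnclosedSet

lemma exists_Ioo_disjoint_of_isCompact {ι : Type*} [LinearOrder ι] [TopologicalSpace ι]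
    [OrderClosedTopology ι] {E : Set ι} (hE : IsCompact E) {x t y : ι} (hx : x ∈ E) (hy : y ∈ E)
    (hxt : x ≤ t) (hty : t ≤ y) (ht : t ∉ E) :
    ∃ a ∈ E, ∃ b ∈ E, t ∈ Ioo a b ∧ Disjoint (Ioo a b) E := by
  obtain ⟨a, ⟨haE, hat⟩, ha_max⟩ :=
    (hE.inter_right isClosed_Iic).exists_isGreatest ⟨x, hx, hxt⟩
  obtain ⟨b, ⟨hbE, htb⟩, hb_min⟩ :=
    (hE.inter_right isClosed_Ici).exists_isLeast ⟨y, hy, hty⟩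
  have htab : t ∈ Ioo a b :=
    ⟨lt_of_le_of_ne hat (ne_of_mem_of_not_mem haE ht),
      lt_of_le_of_ne' htb (ne_of_mem_of_not_mem hbE ht)⟩
  refine ⟨a, haE, b, hbE, htab, disjoint_left.mpr fun s hs hsE ↦ ?_⟩
  rcases le_total s t with hst | hts
  · exact hs.1.not_ge (ha_max ⟨hsE, hst⟩)
  · exact hs.2.not_ge (hb_min ⟨hsE, hts⟩)

lemma image_Icc_inter_image_Icc_subset {ι Y Z : Type*} [PartialOrder ι] {f : Y → Z}
    {α : ι → Z} (hα : Injective α) {β₁ β₂ : ι → Y} (h₁ : f ∘ β₁ = α) (h₂ : f ∘ β₂ = α) {a b : ι}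
    (hne : Disjoint (Ioo a b) {t | β₁ t = β₂ t}) :
    β₁ '' Icc a b ∩ β₂ '' Icc a b ⊆ {β₁ a, β₁ b} := by
  rintro _ ⟨⟨s, hs, rfl⟩, t, -, ht⟩
  obtain rfl : t = s := hα <| by rw [← congrFun h₂, ← congrFun h₁, comp_apply, ht, comp_apply]
  have hendpoint : t = a ∨ t = b := by
    by_contra! h
    exact disjoint_left.mp hne ⟨hs.1.lt_of_ne' h.1, hs.2.lt_of_ne h.2⟩ ht.symm
  exact hendpoint.imp (congrArg β₁) (congrArg β₁)

lemma exists_paths_of_lifts_ne {Y Z : Type*} [TopologicalSpace Y] [T2Space Y] {f : Y → Z}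
    {α : I → Z} (hα : Injective α) {β₁ β₂ : I → Y} (hβ₁ : Continuous β₁) (hβ₂ : Continuous β₂)
    (hlift₁ : f ∘ β₁ = α) (hlift₂ : f ∘ β₂ = α) (h0 : β₁ 0 = β₂ 0) (h1 : β₁ 1 = β₂ 1)
    (hne : β₁ ≠ β₂) :
    ∃ (P Q : Y) (γ₁ γ₂ : Path P Q), P ≠ Q ∧ range γ₁ ⊆ range β₁ ∧ range γ₂ ⊆ range β₂ ∧
      range γ₁ ∩ range γ₂ ⊆ {P, Q} := by
  obtain ⟨t, ht⟩ := ne_iff.mp hne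
  obtain ⟨a, ha, b, hb, htab, hdisj⟩ := exists_Ioo_disjoint_of_isCompact
    (isClosed_eq hβ₁ hβ₂).isCompact h0 h1 nonneg' le_one' ht
  have hab : a < b := htab.1.trans htab.2
  let γ₁ : Path (β₁ a) (β₁ b) :=
    (⟨⟨β₁, hβ₁⟩, rfl, rfl⟩ : Path (β₁ 0) (β₁ 1)).subpath a b
  let γ₂ : Path (β₂ a) (β₂ b) :=
    (⟨⟨β₂, hβ₂⟩, rfl, rfl⟩ : Path (β₂ 0) (β₂ 1)).subpath a b
  have hγ₁ : range γ₁ = β₁ '' Icc a b := Path.range_subpath_of_le _ a b hab.le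
  have hγ₂ : range (γ₂.cast ha hb) = β₂ '' Icc a b := by
    rw [Path.cast_coe]
    exact Path.range_subpath_of_le _ a b hab.le
  refine ⟨β₁ a, β₁ b, γ₁, γ₂.cast ha hb, fun h ↦ hab.ne (hα ?_), ?_, ?_, ?_⟩
  · rw [← hlift₁, comp_apply, comp_apply, h]
  · exact hγ₁ ▸ image_subset_range β₁ _
  · exact hγ₂ ▸ image_subset_range β₂ _
  · rw [hγ₁, hγ₂]
    exact image_Icc_inter_image_Icc_subset hα hlift₁ hlift₂ hdisj

/-- **Uniqueness of lifts of arcs.** Let `Ω ⊆ ℂ` be a simply connected domain and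
`f : Ω → ℂ` a continuous open map. Two lifts of the same arc `α : [0,1] → f(Ω)` that
agree at both endpoints are equal. -/
theorem lifts_of_arcs_unique
    (Ω : Set ℂ) (hΩopen : IsOpen Ω) (hΩconn : IsConnected Ω)
    (hΩsc : SimplyConnectedSpace Ω)
    (f : ℂ → ℂ)
    (hcont : ContinuousOn f Ω)
    (hopen : ∀ V : Set ℂ, V ⊆ Ω → IsOpen V → IsOpen (f '' V))
    (α : unitInterval → ℂ) (hαcont : Continuous α)
    (hαinj : Function.Injective α) (hαmem : ∀ t, α t ∈ f '' Ω)
    (β₁ β₂ : unitInterval → ℂ)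
    (hβ₁cont : Continuous β₁) (hβ₂cont : Continuous β₂)
    (hβ₁mem : ∀ t, β₁ t ∈ Ω) (hβ₂mem : ∀ t, β₂ t ∈ Ω)
    (hβ₁lift : f ∘ β₁ = α) (hβ₂lift : f ∘ β₂ = α)
    (h0 : β₁ 0 = β₂ 0) (h1 : β₁ 1 = β₂ 1) :
    β₁ = β₂ := by
  by_contra hne
  obtain ⟨P, Q, γ₁, γ₂, hPQ, hγ₁, hγ₂, hinter⟩ :=
    exists_paths_of_lifts_ne hαinj hβ₁cont hβ₂cont hβ₁lift hβ₂lift h0 h1 hne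
  let U := enclosedSet γ₁ γ₂
  have hcurveΩ : range γ₁ ∪ range γ₂ ⊆ Ω :=
    union_subset (hγ₁.trans (range_subset_iff.mpr hβ₁mem))
      (hγ₂.trans (range_subset_iff.mpr hβ₂mem))
  have hcurveα : MapsTo f (range γ₁ ∪ range γ₂) (range α) := by
    rintro _ (hz | hz)
    · obtain ⟨t, rfl⟩ := hγ₁ hz
      exact ⟨t, (congrFun hβ₁lift t).symm⟩
    · obtain ⟨t, rfl⟩ := hγ₂ hz
      exact ⟨t, (congrFun hβ₂lift t).symm⟩
  have hUΩ : U ⊆ Ω := enclosedSet_subset hΩopen hΩsc hcurveΩ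
  have hclosure : closure U ⊆ Ω := by
    rw [closure_eq_self_union_frontier]
    exact union_subset hUΩ (frontier_enclosedSet_subset.trans hcurveΩ)
  exact not_isOpen_image_of_mapsTo_frontier_arc hαcont hαinj (enclosedSet_nonempty hPQ hinter)
    isBounded_enclosedSet (hcont.mono hclosure) (hcurveα.mono_left frontier_enclosedSet_subset)
    (hopen U hUΩ isOpen_enclosedSet)
end

section
/- Let Ω ⊆ ℂ be a domain and f : Ω → ℂ a continuous, open, and discrete mapping. Let x₀ ∈ Ω and let r > 0 be so small that U₀ := U(x₀,f,r), the connected component of f⁻¹(B(f(x₀),r)) containing x₀, is a normal neighborhood of x₀ (i.e. a normal domain containing x₀ with closure(U₀) ∩ f⁻¹({f(x₀)}) = {x₀}) contained in a simply connected open subset of Ω. Then U₀ ∩ B_f ⊆ {x₀}, where B_f is the set of points at which f fails to be a local homeomorphism. -/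
/-!
It suffices to show that `f` is injective near every `x₁ ∈ U₀` other than `x₀`. Suppose a small
normal neighbourhood `R` of `x₁` contains points `a ≠ b` with a common value `y`. By openness `y`
may be taken off the line through `f x₀` and `f x₁`, so that the segments `[y, f x₀]` and
`[y, f x₁]` meet only in `y`. Let `N₁` and `N₂` be thin convex open neighbourhoods of these
segments. The preimage of `N₁` in `U₀` is connected because `x₀` is the only preimage of `f x₀`,
and likewise the preimage of `N₂` in `R`. Since `N₁ ∪ N₂` is star-shaped about `y`, the maximum
principle for open maps shows that its preimage in `U₀` does not cut off a bounded piece of the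
plane; such a piece would lie in the simply connected set around `U₀`, where `f` is defined. By
Janiszewski's theorem the preimage of `N₁ ∩ N₂` in `R` is therefore connected. It contains both
`a` and `b`, yet it lies over a small neighbourhood of `y`, over which `a` is separated from `b`.

Janiszewski's theorem itself comes from continuous logarithms: if `G₁ ∩ G₂` fell into two open
pieces containing `a` and `b`, then `(z - a) / (z - b)` would have a logarithm off `G₁` and one off
`G₂`. These agree up to a constant off the union, and together they give a logarithm on the
boundary of the piece around `a`, which is impossible.
-/

/-- The branch set of `f` on `Ω`: the set of points of `Ω` at which `f` fails to be a
local homeomorphism. -/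
def branchSet (f : ℂ → ℂ) (Ω : Set ℂ) : Set ℂ :=
  {x ∈ Ω | ¬ ∃ U : Set ℂ, IsOpen U ∧ x ∈ U ∧ U ⊆ Ω ∧
      ∃ e : PartialHomeomorph ℂ ℂ, e.source = U ∧ Set.EqOn f (↑e) U}

open Set Metric Complex Filter Topology

section ContinuousLog

variable {X : Type*} [TopologicalSpace X]

/-- `g` has a continuous logarithm on `S`. Separation properties of plane sets are detected by the
existence of continuous logarithms of `z - a` and `(z - a) / (z - b)`. -/
def HasContinuousLogOn (g : X → ℂ) (S : Set X) : Prop :=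
  ∃ h : X → ℂ, ContinuousOn h S ∧ EqOn (exp ∘ h) g S

namespace HasContinuousLogOn

variable {g g' : X → ℂ} {S T : Set X}

lemma mono (hg : HasContinuousLogOn g T) (hST : S ⊆ T) : HasContinuousLogOn g S :=
  let ⟨h, hcont, hexp⟩ := hg
  ⟨h, hcont.mono hST, hexp.mono hST⟩

lemma congr (hg : HasContinuousLogOn g S) (hgg' : EqOn g g' S) : HasContinuousLogOn g' S :=
  let ⟨h, hcont, hexp⟩ := hg
  ⟨h, hcont, hexp.trans hgg'⟩

lemma mul (hg : HasContinuousLogOn g S) (hg' : HasContinuousLogOn g' S) :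
    HasContinuousLogOn (g * g') S := by
  obtain ⟨h, hcont, hexp⟩ := hg
  obtain ⟨h', hcont', hexp'⟩ := hg'
  refine ⟨h + h', hcont.add hcont', fun z hz => ?_⟩
  simp [exp_add, ← hexp hz, ← hexp' hz]

lemma inv (hg : HasContinuousLogOn g S) : HasContinuousLogOn g⁻¹ S := by
  obtain ⟨h, hcont, hexp⟩ := hg
  refine ⟨-h, hcont.neg, fun z hz => ?_⟩
  simp [exp_neg, ← hexp hz]

lemma of_mem_slitPlane (hg : ContinuousOn g S) (hslit : ∀ z ∈ S, g z ∈ slitPlane) :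
    HasContinuousLogOn g S :=
  ⟨fun z => log (g z), hg.clog hslit, fun z hz => exp_log (slitPlane_ne_zero (hslit z hz))⟩

-- On the connected intersection the two logarithms differ by a constant.
lemma union (hg : HasContinuousLogOn g S) (hg' : HasContinuousLogOn g T) (hS : IsClosed S)
    (hT : IsClosed T) (hST : IsPreconnected (S ∩ T)) : HasContinuousLogOn g (S ∪ T) := by
  classical
  obtain ⟨h₁, hcont₁, hexp₁⟩ := hg
  obtain ⟨h₂, hcont₂, hexp₂⟩ := hg'
  obtain ⟨k, hk, hdiff⟩ : ∃ k, exp k = 1 ∧ EqOn h₁ (fun z => h₂ z + k) (S ∩ T) := by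
    obtain hempty | ⟨w, hw⟩ := (S ∩ T).eq_empty_or_nonempty
    · exact ⟨0, exp_zero, by simp [hempty]⟩
    have hk : exp (h₁ w - h₂ w) = 1 := by
      rw [exp_sub, show exp (h₁ w) = g w from hexp₁ hw.1, ← show exp (h₂ w) = g w from hexp₂ hw.2,
        div_self (exp_ne_zero _)]
    refine ⟨h₁ w - h₂ w, hk, isCoveringMap_exp.eqOn_of_comp_eqOn hST
      (hcont₁.mono inter_subset_left) ((hcont₂.mono inter_subset_right).add continuousOn_const)
      (fun z hz => ?_) hw (by ring)⟩
    simpa [exp_add, hk] using (hexp₁ hz.1).trans (hexp₂ hz.2).symm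
  have heqS : EqOn (S.piecewise h₁ fun z => h₂ z + k) h₁ S := S.piecewise_eqOn _ _
  have heqT : EqOn (S.piecewise h₁ fun z => h₂ z + k) (fun z => h₂ z + k) T := fun z hzT => by
    by_cases hzS : z ∈ S
    · exact (heqS hzS).trans (hdiff ⟨hzS, hzT⟩)
    · exact S.piecewise_eq_of_notMem _ _ hzS
  refine ⟨_, (hcont₁.congr heqS).union_of_isClosed ((hcont₂.add continuousOn_const).congr heqT)
    hS hT, ?_⟩
  rintro z (hz | hz)
  · simpa [heqS hz] using hexp₁ hz
  · simpa [heqT hz, exp_add, hk] using hexp₂ hz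

end HasContinuousLogOn

lemma hasContinuousLogOn_of_isSimplyConnected [LocallyPathConnectedSpace X] {g : X → ℂ} {V : Set X}
    (hV : IsSimplyConnected V) (hVo : IsOpen V) (hg : ContinuousOn g V) (hg0 : ∀ z ∈ V, g z ≠ 0) :
    HasContinuousLogOn g V :=
  exists_continuousOn_eqOn_exp_comp hV hVo hg fun ⟨z, hz, h0⟩ => hg0 z hz h0

-- Along the circle a logarithm would differ from `t * I` by a constant, against periodicity.
lemma not_hasContinuousLogOn_sub_sphere {a : ℂ} {s : ℝ} (hs : 0 < s) :
    ¬ HasContinuousLogOn (fun z => z - a) (sphere a s) := by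
  rintro ⟨h, hcont, hexp⟩
  have hmem : ∀ t : ℝ, circleMap a s t ∈ sphere a s := circleMap_mem_sphere a hs.le
  have hshift : Continuous fun t : ℝ => h (circleMap a s t) - t * I :=
    (hcont.comp_continuous (continuous_circleMap a s) hmem).sub (by fun_prop)
  have hexp_shift : ∀ t : ℝ, exp (h (circleMap a s t) - t * I) = s := fun t => by
    rw [exp_sub, show exp (h (circleMap a s t)) = circleMap a s t - a from hexp (hmem t),
      circleMap_sub_center, circleMap_zero, mul_div_cancel_right₀ _ (exp_ne_zero _)]
  have hconst := isCoveringMap_exp.const_of_comp hshift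
    (fun t t' => Subtype.ext <| (hexp_shift t).trans (hexp_shift t').symm) 0 (2 * Real.pi)
  have hper : circleMap a s (2 * Real.pi) = circleMap a s 0 := by
    simpa using periodic_circleMap a s 0
  rw [hper] at hconst
  exact two_pi_I_ne_zero (by push_cast at hconst; linear_combination hconst)

lemma hasContinuousLogOn_sub_div_sub_of_mem_ball {S : Set ℂ} {c c' : ℂ} {ρ : ℝ}
    (hS : Disjoint S (ball c ρ)) (hc' : c' ∈ ball c ρ) :
    HasContinuousLogOn (fun z => (z - c') / (z - c)) S := by
  have hfar : ∀ z ∈ S, ρ ≤ ‖z - c‖ := fun z hz => by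
    simpa [dist_eq_norm] using disjoint_left.1 hS hz
  have hnear : ‖c - c'‖ < ρ := by rwa [← dist_eq_norm, ← mem_ball']
  have hne : ∀ z ∈ S, z - c ≠ 0 := fun z hz =>
    norm_pos_iff.1 ((norm_nonneg _).trans_lt (hnear.trans_le (hfar z hz)))
  refine .of_mem_slitPlane (ContinuousOn.div (by fun_prop) (by fun_prop) hne) fun z hz => ?_
  have hsplit : (z - c') / (z - c) = 1 + (c - c') / (z - c) := by
    field_simp [hne z hz]
    ring
  rw [hsplit]
  refine mem_slitPlane_of_norm_lt_one ?_
  rw [norm_div, div_lt_one (norm_pos_iff.2 (hne z hz))]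
  exact hnear.trans_le (hfar z hz)

lemma hasContinuousLogOn_sub_div_sub_compl {G : Set ℂ} (hG : IsPreconnected G)
    (hGo : IsOpen G) {a b : ℂ} (ha : a ∈ G) (hb : b ∈ G) :
    HasContinuousLogOn (fun z => (z - a) / (z - b)) Gᶜ := by
  have hne : ∀ c ∈ G, ∀ z ∈ Gᶜ, z - c ≠ 0 := fun c hc z hz =>
    sub_ne_zero.2 (ne_of_mem_of_not_mem hc hz).symm
  refine hG.induction₂ (fun a b => HasContinuousLogOn (fun z => (z - a) / (z - b)) Gᶜ)
    (fun c hc => ?_) (fun u v w _ hv _ huv hvw => ?_) (fun u v _ _ huv => ?_) ha hb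
  · obtain ⟨ρ, hρ, hball⟩ := Metric.isOpen_iff.1 hGo c hc
    filter_upwards [mem_nhdsWithin_of_mem_nhds (ball_mem_nhds c hρ)] with c' hc'
    refine (hasContinuousLogOn_sub_div_sub_of_mem_ball
      (disjoint_compl_left.mono_right hball) hc').inv.congr fun z _ => ?_
    simp [inv_div]
  · exact (huv.mul hvw).congr fun z hz => div_mul_div_cancel₀ (hne v hv z hz)
  · exact huv.inv.congr fun z _ => by simp [inv_div]

-- Otherwise `z - p` off `O` extends to a zero-free function on `ℂ`, which has a logarithm.
lemma not_hasContinuousLogOn_frontier {O : Set ℂ} {p : ℂ} {g : ℂ → ℂ}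
    (hO : Bornology.IsBounded O) (hp : p ∈ O) (hg : ContinuousOn g (closure O))
    (hg0 : ∀ z ∈ closure O, g z ≠ 0) :
    ¬ HasContinuousLogOn (fun z => (z - p) / g z) (frontier O) := by
  classical
  rintro ⟨h, hcont, hexp⟩
  obtain ⟨H, hH⟩ := ContinuousMap.exists_restrict_eq isClosed_frontier
    ⟨(frontier O).domRestrict h, hcont.domRestrict⟩
  have hHh : ∀ z ∈ frontier O, H z = h z := fun z hz => DFunLike.congr_fun hH ⟨z, hz⟩
  set F : ℂ → ℂ := O.piecewise (fun z => exp (H z) * g z) fun z => z - p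
  have hF : Continuous F := by
    refine continuous_piecewise (fun z hz => ?_) (by fun_prop) (by fun_prop)
    rw [hHh z hz, show exp (h z) = _ from hexp hz,
      div_mul_cancel₀ _ (hg0 z (frontier_subset_closure hz))]
  have hF0 : ∀ z, F z ≠ 0 := fun z => by
    by_cases hz : z ∈ O
    · simp [F, hz, hg0 z (subset_closure hz), exp_ne_zero]
    · simpa [F, hz, sub_eq_zero] using (ne_of_mem_of_not_mem hp hz).symm
  have : ContractibleSpace (univ : Set ℂ) := convex_univ.contractibleSpace univ_nonempty
  have hlog : HasContinuousLogOn F univ :=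
    hasContinuousLogOn_of_isSimplyConnected (SimplyConnectedSpace.ofContractible _) isOpen_univ
      hF.continuousOn fun z _ => hF0 z
  obtain ⟨s, hs, hOs⟩ := hO.subset_ball_lt 0 p
  refine not_hasContinuousLogOn_sub_sphere (a := p) hs
    ((hlog.mono (subset_univ _)).congr fun z hz => ?_)
  exact O.piecewise_eq_of_notMem _ _ fun hzO => (hOs hzO).ne hz

-- Janiszewski's theorem, for open sets in the plane.
theorem isPreconnected_inter_of_isPreconnected_compl_union {G₁ G₂ : Set ℂ} (h₁ : IsPreconnected G₁)
    (h₂ : IsPreconnected G₂) (ho₁ : IsOpen G₁) (ho₂ : IsOpen G₂)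
    (hcompl : IsPreconnected (G₁ ∪ G₂)ᶜ) (hb : Bornology.IsBounded (G₁ ∩ G₂)) :
    IsPreconnected (G₁ ∩ G₂) := by
  rintro u v hu hv hcover ⟨a, ha, hau⟩ ⟨b, hb', hbv⟩
  by_contra hdisj
  set O := (G₁ ∩ G₂) ∩ u
  have hOo : IsOpen O := (ho₁.inter ho₂).inter hu
  have hOv : Disjoint (closure O) (G₁ ∩ G₂ ∩ v) := by
    refine Disjoint.closure_left (disjoint_left.2 fun z hz hz' => ?_) ((ho₁.inter ho₂).inter hv)
    exact hdisj ⟨z, hz.1, hz.2, hz'.2⟩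
  have hfr : frontier O ⊆ (G₁ ∩ G₂)ᶜ := fun z hz hzG => by
    rw [hOo.frontier_eq] at hz
    obtain hzu | hzv := hcover hzG
    · exact hz.2 ⟨hzG, hzu⟩
    · exact disjoint_left.1 hOv hz.1 ⟨hzG, hzv⟩
  have hlog : HasContinuousLogOn (fun z => (z - a) / (z - b)) (G₁ ∩ G₂)ᶜ := by
    rw [compl_inter]
    refine .union (hasContinuousLogOn_sub_div_sub_compl h₁ ho₁ ha.1 hb'.1)
      (hasContinuousLogOn_sub_div_sub_compl h₂ ho₂ ha.2 hb'.2)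
      ho₁.isClosed_compl ho₂.isClosed_compl (by rwa [← compl_union])
  refine not_hasContinuousLogOn_frontier (hb.subset inter_subset_left) ⟨ha, hau⟩
    (by fun_prop) (fun z hz => ?_) (hlog.mono hfr)
  exact sub_ne_zero.2 fun hzb => disjoint_left.1 hOv hz (hzb ▸ ⟨hb', hbv⟩)

end ContinuousLog

section ProperOpenMaps

variable {X Y : Type*} [TopologicalSpace X] [TopologicalSpace Y]

lemma closure_connectedComponentIn_inter_subset (F : Set X) (x : X) :
    closure (connectedComponentIn F x) ∩ F ⊆ connectedComponentIn F x := by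
  rintro z ⟨hz, hzF⟩
  by_cases hx : x ∈ F
  · have hinsert : IsPreconnected (insert z (connectedComponentIn F x)) :=
      isPreconnected_connectedComponentIn.subset_closure (subset_insert _ _)
        (insert_subset hz subset_closure)
    exact hinsert.subset_connectedComponentIn (mem_insert_of_mem z (mem_connectedComponentIn hx))
      (insert_subset hzF (connectedComponentIn_subset F x)) (mem_insert z _)
  · simp [connectedComponentIn_eq_empty hx] at hz

/-- `f` is a continuous open map on the open relatively compact set `R`, and `R ∩ f ⁻¹' N → N` is
proper: no point of the boundary of `R` is mapped into `N`. -/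
structure IsProperOpenOver (f : X → Y) (R : Set X) (N : Set Y) : Prop where
  isOpen : IsOpen R
  isCompact_closure : IsCompact (closure R)
  continuousOn : ContinuousOn f (closure R)
  isOpen_image : ∀ Q ⊆ R, IsOpen Q → IsOpen (f '' Q)
  mem_of_mem_closure : ∀ z ∈ closure R, f z ∈ N → z ∈ R

lemma isProperOpenOver_connectedComponentIn [LocallyConnectedSpace X] {f : X → Y} {Ω : Set X}
    {N : Set Y} {x : X} (hΩ : IsOpen Ω) (hcont : ContinuousOn f Ω)
    (hopen : ∀ Q ⊆ Ω, IsOpen Q → IsOpen (f '' Q)) (hN : IsOpen N)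
    (hcompact : IsCompact (closure (connectedComponentIn (Ω ∩ f ⁻¹' N) x)))
    (hclosure : closure (connectedComponentIn (Ω ∩ f ⁻¹' N) x) ⊆ Ω) :
    IsProperOpenOver f (connectedComponentIn (Ω ∩ f ⁻¹' N) x) N where
  isOpen := (hcont.isOpen_inter_preimage hΩ hN).connectedComponentIn
  isCompact_closure := hcompact
  continuousOn := hcont.mono hclosure
  isOpen_image Q hQ := hopen Q (hQ.trans (subset_closure.trans hclosure))
  mem_of_mem_closure _ hz hfz :=
    closure_connectedComponentIn_inter_subset _ _ ⟨hz, hclosure hz, hfz⟩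

namespace IsProperOpenOver

variable {f : X → Y} {R R' U : Set X} {N N' : Set Y}

lemma mono (h : IsProperOpenOver f R N) (hN : N' ⊆ N) : IsProperOpenOver f R N' :=
  { h with mem_of_mem_closure := fun z hz hfz => h.mem_of_mem_closure z hz (hN hfz) }

lemma isOpen_inter_preimage (h : IsProperOpenOver f R N) (hN' : IsOpen N') :
    IsOpen (R ∩ f ⁻¹' N') :=
  (h.continuousOn.mono subset_closure).isOpen_inter_preimage h.isOpen hN'

lemma closure_inter_preimage_subset (h : IsProperOpenOver f R (closure N)) :
    closure (R ∩ f ⁻¹' N) ⊆ R ∩ f ⁻¹' closure N := fun z hz => by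
  have hzR : z ∈ closure R := closure_mono inter_subset_left hz
  have hfz : f z ∈ closure N :=
    closure_mono (image_subset_iff.2 inter_subset_right)
      (((h.continuousOn z hzR).mono (inter_subset_left.trans subset_closure)).mem_closure_image hz)
  exact ⟨h.mem_of_mem_closure z hzR hfz, hfz⟩

lemma sdiff_closure (h : IsProperOpenOver f U N) (h' : IsProperOpenOver f R N) :
    IsProperOpenOver f (U \ closure R) N where
  isOpen := h.isOpen.sdiff isClosed_closure
  isCompact_closure :=
    h.isCompact_closure.of_isClosed_subset isClosed_closure (closure_mono sdiff_subset)
  continuousOn := h.continuousOn.mono (closure_mono sdiff_subset)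
  isOpen_image Q hQ := h.isOpen_image Q (hQ.trans sdiff_subset)
  mem_of_mem_closure z hz hfz := by
    refine ⟨h.mem_of_mem_closure z (closure_mono sdiff_subset hz) hfz, fun hzR => ?_⟩
    have hdisj : Disjoint R (closure (U \ closure R)) :=
      (disjoint_sdiff_right.mono_left subset_closure).closure_right h'.isOpen
    exact disjoint_left.1 hdisj (h'.mem_of_mem_closure z hzR hfz) hz

lemma subset_of_isPreconnected (h : IsProperOpenOver f R N) {S : Set X} (hS : IsPreconnected S)
    (hSN : MapsTo f S N) (hSR : (S ∩ R).Nonempty) : S ⊆ R :=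
  hS.subset_of_closure_inter_subset h.isOpen hSR fun z hz => h.mem_of_mem_closure z hz.1 (hSN hz.2)

-- The image of the component is open by openness of `f` and relatively closed by properness.
lemma subset_image_connectedComponentIn [LocallyConnectedSpace X] [T2Space Y]
    (h : IsProperOpenOver f R N) (hN : IsPreconnected N) (hNo : IsOpen N) {x : X} (hx : x ∈ R)
    (hfx : f x ∈ N) : N ⊆ f '' connectedComponentIn (R ∩ f ⁻¹' N) x := by
  set C := connectedComponentIn (R ∩ f ⁻¹' N) x
  have hCR : C ⊆ R ∩ f ⁻¹' N := connectedComponentIn_subset _ _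
  have hCo : IsOpen C := (h.isOpen_inter_preimage hNo).connectedComponentIn
  have hclosure : closure C ⊆ closure R := closure_mono (hCR.trans inter_subset_left)
  have hclosed : IsClosed (f '' closure C) :=
    ((h.isCompact_closure.of_isClosed_subset isClosed_closure hclosure).image_of_continuousOn
      (h.continuousOn.mono hclosure)).isClosed
  refine hN.subset_of_closure_inter_subset (h.isOpen_image C (hCR.trans inter_subset_left) hCo)
    ⟨f x, hfx, mem_image_of_mem f (mem_connectedComponentIn ⟨hx, hfx⟩)⟩ ?_
  rintro y ⟨hy, hyN⟩
  obtain ⟨z, hz, rfl⟩ := closure_minimal (image_mono subset_closure) hclosed hy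
  exact mem_image_of_mem f (closure_connectedComponentIn_inter_subset _ _
    ⟨hz, h.mem_of_mem_closure z (hclosure hz) hyN, hyN⟩)

lemma isPreconnected_union [LocallyConnectedSpace X] [T2Space Y] (h : IsProperOpenOver f R N)
    (hN : IsPreconnected N) (hNo : IsOpen N) {G : Set X} (hG : IsPreconnected G) {y : Y}
    (hy : y ∈ N) (hGy : R ∩ f ⁻¹' {y} ⊆ G) : IsPreconnected (G ∪ R ∩ f ⁻¹' N) := by
  obtain hempty | ⟨w, hw⟩ := (R ∩ f ⁻¹' N).eq_empty_or_nonempty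
  · rwa [hempty, union_empty]
  have hmeet : ∀ z ∈ R ∩ f ⁻¹' N, ∃ g ∈ G, g ∈ connectedComponentIn (R ∩ f ⁻¹' N) z := by
    intro z hz
    obtain ⟨g, hg, hgy⟩ := h.subset_image_connectedComponentIn hN hNo hz.1 hz.2 hy
    exact ⟨g, hGy ⟨(connectedComponentIn_subset _ _ hg).1, hgy⟩, hg⟩
  obtain ⟨x, hx, -⟩ := hmeet w hw
  refine isPreconnected_of_forall x ?_
  rintro z (hz | hz)
  · exact ⟨G, subset_union_left, hx, hz, hG⟩
  · obtain ⟨g, hg, hgz⟩ := hmeet z hz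
    exact ⟨G ∪ connectedComponentIn (R ∩ f ⁻¹' N) z,
      union_subset_union_right G (connectedComponentIn_subset _ _), Or.inl hx,
      Or.inr (mem_connectedComponentIn hz),
      hG.union g hg hgz isPreconnected_connectedComponentIn⟩

end IsProperOpenOver

/-- `R` is a normal neighbourhood of `x` for `f`, with properness required only over the
neighbourhood `N` of `f x`: the map `f` is open and proper from `R` over `N`, and `x` is the only
point of `R` in its fibre. -/
structure IsNormalNhd (f : X → Y) (x : X) (R : Set X) (N : Set Y) : Prop
    extends IsProperOpenOver f R N where
  mem : x ∈ R
  map_mem : f x ∈ N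
  fiber_subset : R ∩ f ⁻¹' {f x} ⊆ {x}

namespace IsNormalNhd

variable {f : X → Y} {x : X} {R : Set X} {N N' : Set Y}

lemma mono (h : IsNormalNhd f x R N) (hN : N' ⊆ N) (hx : f x ∈ N') : IsNormalNhd f x R N' :=
  { h with toIsProperOpenOver := h.toIsProperOpenOver.mono hN, map_mem := hx }

lemma isPreconnected_inter_preimage [LocallyConnectedSpace X] [T2Space Y]
    (h : IsNormalNhd f x R N) (hN : IsPreconnected N) (hNo : IsOpen N) :
    IsPreconnected (R ∩ f ⁻¹' N) := by
  have hinsert := h.isPreconnected_union hN hNo isPreconnected_singleton h.map_mem h.fiber_subset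
  rwa [singleton_union, insert_eq_of_mem (mem_inter h.mem h.map_mem)] at hinsert

end IsNormalNhd

lemma exists_isNormalNhd_of_eventually_ne [LocallyCompactSpace X] [RegularSpace X] [T2Space Y]
    {f : X → Y} {O : Set X} {x : X} (hO : IsOpen O) (hx : x ∈ O) (hcont : ContinuousOn f O)
    (hopen : ∀ Q ⊆ O, IsOpen Q → IsOpen (f '' Q)) (hdisc : ∀ᶠ z in 𝓝[≠] x, f z ≠ f x) :
    ∃ R ⊆ O, ∃ N, IsOpen N ∧ IsNormalNhd f x R N := by
  obtain ⟨I, hI, hIo, hxI⟩ := mem_nhds_iff.1 (eventually_nhdsWithin_iff.1 hdisc)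
  have huniq : ∀ z ∈ I, f z = f x → z = x := fun z hz hfz => by_contra fun hne => hI hz hne hfz
  obtain ⟨R, hRo, hxR, hRcl, hRc⟩ := exists_open_between_and_isCompact_closure
    isCompact_singleton (hIo.inter hO) (singleton_subset_iff.2 ⟨hxI, hx⟩)
  rw [singleton_subset_iff] at hxR
  have hRO : closure R ⊆ O := hRcl.trans inter_subset_right
  have hfrontier : IsCompact (f '' frontier R) :=
    (hRc.of_isClosed_subset isClosed_frontier frontier_subset_closure).image_of_continuousOn
      (hcont.mono (frontier_subset_closure.trans hRO))
  refine ⟨R, subset_closure.trans hRO, (f '' frontier R)ᶜ, hfrontier.isClosed.isOpen_compl,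
    { isOpen := hRo
      isCompact_closure := hRc
      continuousOn := hcont.mono hRO
      isOpen_image := fun Q hQ => hopen Q (hQ.trans (subset_closure.trans hRO))
      mem_of_mem_closure := fun z hz hfz => by_contra fun hzR =>
        hfz (mem_image_of_mem f (hRo.frontier_eq ▸ ⟨hz, hzR⟩))
      mem := hxR
      map_mem := ?_
      fiber_subset := fun z hz => huniq z (hRcl (subset_closure hz.1)).1 hz.2 }⟩
  rintro ⟨z, hz, hfz⟩
  obtain rfl := huniq z (hRcl (frontier_subset_closure hz)).1 hfz
  exact (hRo.frontier_eq ▸ hz).2 hxR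

lemma eventually_ne_of_inter_fiber_eq_singleton {X Y : Type*} [TopologicalSpace X] {f : X → Y}
    {Ω W : Set X} {x : X} (hΩ : IsOpen Ω) (hx : x ∈ Ω) (hW : IsOpen W) (hxW : x ∈ W)
    (hfiber : W ∩ (Ω ∩ f ⁻¹' {f x}) = {x}) : ∀ᶠ z in 𝓝[≠] x, f z ≠ f x := by
  filter_upwards [self_mem_nhdsWithin, mem_nhdsWithin_of_mem_nhds (hΩ.mem_nhds hx),
    mem_nhdsWithin_of_mem_nhds (hW.mem_nhds hxW)] with z hne hzΩ hzW hfz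
  exact hne (hfiber.subset ⟨hzW, hzΩ, hfz⟩)

end ProperOpenMaps

section NormedSpace

variable {E : Type*} [NormedAddCommGroup E] [NormedSpace ℝ E]

lemma isPreconnected_compl_closedBall (hE : 1 < Module.rank ℝ E) (x : E) {s : ℝ} (hs : 0 ≤ s) :
    IsPreconnected (closedBall x s)ᶜ := by
  have hpolar : (closedBall x s)ᶜ =
      (fun p : ℝ × E => x + p.1 • p.2) '' (Ioi s ×ˢ sphere (0 : E) 1) := by
    ext z
    simp only [mem_compl_iff, mem_closedBall, not_le, mem_image, mem_prod, mem_Ioi,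
      mem_sphere_zero_iff_norm, Prod.exists, dist_eq_norm]
    constructor
    · intro hz
      have hpos : ‖z - x‖ ≠ 0 := (hs.trans_lt hz).ne'
      exact ⟨‖z - x‖, ‖z - x‖⁻¹ • (z - x), ⟨hz, by simp [norm_smul, hpos]⟩, by simp [hpos]⟩
    · rintro ⟨t, v, ⟨ht, hv⟩, rfl⟩
      simpa [norm_smul, hv] using ht.trans_le (le_abs_self t)
  rw [hpolar]
  exact (isPreconnected_Ioi.prod (isPreconnected_sphere hE 0 1)).image _ (by fun_prop)

-- Of two closed pieces covering `Gᶜ`, one contains the outside of a large ball; the other one is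
-- compact and becomes open together with `G`.
lemma isPreconnected_compl_of_forall_isCompact [ProperSpace E] (hE : 1 < Module.rank ℝ E)
    {G : Set E} (hGo : IsOpen G) (hG : Bornology.IsBounded G)
    (hempty : ∀ Q, IsCompact Q → Disjoint Q G → IsOpen (Q ∪ G) → Q = ∅) :
    IsPreconnected Gᶜ := by
  obtain ⟨s, hs, hGs⟩ := hG.subset_closedBall_lt 0 0
  have hcover : ∀ u v, IsClosed u → IsClosed v → Gᶜ ⊆ u ∪ v → Disjoint u v →
      (closedBall 0 s)ᶜ ⊆ u → Gᶜ ⊆ u := by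
    intro u v hu hv huv hdisj hsu
    have hcompact : IsCompact (v \ G) :=
      (isCompact_closedBall 0 s).of_isClosed_subset (hv.sdiff hGo) fun z hz =>
        by_contra fun hzs => disjoint_left.1 hdisj (hsu hzs) hz.1
    have hopen : v \ G ∪ G = uᶜ ∪ G := by
      rw [sdiff_union_self]
      refine (union_subset_union_left G hdisj.subset_compl_left).antisymm
        (union_subset (fun z hz => ?_) subset_union_right)
      exact or_iff_not_imp_right.2 fun hzG => (huv hzG).resolve_left hz
    have hvG : v \ G = ∅ := hempty _ hcompact disjoint_sdiff_left
      (hopen ▸ hu.isOpen_compl.union hGo)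
    exact fun z hz => (huv hz).resolve_right fun hzv => (hvG.subset ⟨hzv, hz⟩).elim
  refine (isPreconnected_iff_subset_of_fully_disjoint_closed hGo.isClosed_compl).2
    fun u v hu hv huv hdisj => ?_
  obtain hsu | hsv := isPreconnected_iff_subset_of_disjoint_closed.1
    (isPreconnected_compl_closedBall hE 0 hs.le) u v hu hv ((compl_subset_compl.2 hGs).trans huv)
    (by simp [hdisj.inter_eq])
  · exact Or.inl (hcover u v hu hv huv hdisj hsu)
  · exact Or.inr (hcover v u hv hu (union_comm u v ▸ huv) hdisj.symm hsv)

-- A point of `O \ N` farthest from `y` could be pushed outwards along the ray from `y`.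
lemma subset_of_isCompact_sdiff_of_starConvex {O N : Set E} {y : E} (hO : IsOpen O)
    (hN : StarConvex ℝ y N) (hy : y ∈ N) (hcompact : IsCompact (O \ N)) : O ⊆ N := by
  rw [← sdiff_eq_empty, ← not_nonempty_iff_eq_empty]
  intro hne
  obtain ⟨p, ⟨hpO, hpN⟩, hmax⟩ := hcompact.exists_isMaxOn hne
    (f := fun w => dist w y) (by fun_prop)
  have hpush : ∀ᶠ t in 𝓝[>] (1 : ℝ), AffineMap.lineMap y p t ∈ O :=
    nhdsWithin_le_nhds (AffineMap.lineMap_continuous.continuousAt.eventually_mem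
      (hO.mem_nhds (by simpa using hpO)))
  obtain ⟨t, htO, ht⟩ := (hpush.and self_mem_nhdsWithin).exists
  have ht0 : 0 < t := zero_lt_one.trans ht
  have htN : AffineMap.lineMap y p t ∉ N := fun htN => hpN <| by
    have hback := hN.add_smul_sub_mem htN (inv_nonneg.2 ht0.le) (inv_le_one_of_one_le₀ ht.le)
    simpa [AffineMap.lineMap_apply, smul_smul, ht0.ne'] using hback
  have hle : dist (AffineMap.lineMap y p t) y ≤ dist p y := hmax ⟨htO, htN⟩
  rw [dist_lineMap_left, Real.norm_of_nonneg ht0.le, dist_comm y p] at hle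
  have hpos : 0 < dist p y := dist_pos.2 fun h => hpN (h ▸ hy)
  exact (lt_mul_of_one_lt_left hpos ht).not_ge hle

lemma exists_convex_nhdsSet_closure_subset {K W : Set E} (hK : IsCompact K) (hconv : Convex ℝ K)
    (hW : W ∈ 𝓝ˢ K) : ∃ N, IsOpen N ∧ Convex ℝ N ∧ K ⊆ N ∧ closure N ⊆ W := by
  obtain ⟨δ, hδ, hsub⟩ := (hasBasis_nhdsSet_cthickening hK).mem_iff.1 hW
  exact ⟨thickening δ K, isOpen_thickening, hconv.thickening δ, self_subset_thickening hδ K,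
    (closure_thickening_subset_cthickening δ K).trans hsub⟩

lemma exists_convex_nhdsSet_inter_subset {K₁ K₂ O₁ O₂ W : Set E} (hK₁ : IsCompact K₁)
    (hK₂ : IsCompact K₂) (hconv₁ : Convex ℝ K₁) (hconv₂ : Convex ℝ K₂) (hO₁ : O₁ ∈ 𝓝ˢ K₁)
    (hO₂ : O₂ ∈ 𝓝ˢ K₂) (hW : W ∈ 𝓝ˢ (K₁ ∩ K₂)) :
    ∃ N₁ N₂, (IsOpen N₁ ∧ Convex ℝ N₁ ∧ K₁ ⊆ N₁ ∧ closure N₁ ⊆ O₁) ∧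
      (IsOpen N₂ ∧ Convex ℝ N₂ ∧ K₂ ⊆ N₂ ∧ closure N₂ ⊆ O₂) ∧ N₁ ∩ N₂ ⊆ W := by
  rw [hK₁.nhdsSet_inter_eq hK₂] at hW
  obtain ⟨W₁, hW₁, W₂, hW₂, hWW⟩ := mem_inf_iff_superset.1 hW
  obtain ⟨N₁, ho₁, hc₁, hKN₁, hN₁⟩ :=
    exists_convex_nhdsSet_closure_subset hK₁ hconv₁ (inter_mem hO₁ hW₁)
  obtain ⟨N₂, ho₂, hc₂, hKN₂, hN₂⟩ :=
    exists_convex_nhdsSet_closure_subset hK₂ hconv₂ (inter_mem hO₂ hW₂)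
  exact ⟨N₁, N₂, ⟨ho₁, hc₁, hKN₁, hN₁.trans inter_subset_left⟩,
    ⟨ho₂, hc₂, hKN₂, hN₂.trans inter_subset_left⟩,
    (inter_subset_inter (subset_closure.trans (hN₁.trans inter_subset_right))
      (subset_closure.trans (hN₂.trans inter_subset_right))).trans hWW⟩

lemma isCompact_segment (p q : E) : IsCompact (segment ℝ p q) :=
  convexHull_pair (𝕜 := ℝ) p q ▸
    (toFinite ({p, q} : Set E)).isCompact_convexHull ℝ

lemma exists_mem_notMem_line (hE : 1 < Module.rank ℝ E) (p q : E) {O : Set E} (hO : IsOpen O)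
    (hne : O.Nonempty) : ∃ y ∈ O, y ∉ line[ℝ, p, q] := by
  by_contra! hline
  have htop : line[ℝ, p, q] = ⊤ :=
    top_unique (hO.affineSpan_eq_top hne ▸ affineSpan_le.2 hline)
  have hcollinear := collinear_pair ℝ p q
  rw [Collinear, ← direction_affineSpan, htop, AffineSubspace.direction_top, rank_top] at hcollinear
  exact hcollinear.not_gt hE

lemma segment_inter_segment_subset_of_notMem_line {p q y : E} (hpq : p ≠ q)
    (hy : y ∉ line[ℝ, p, q]) : segment ℝ y p ∩ segment ℝ y q ⊆ {y} := by
  have hind : AffineIndependent ℝ ![y, p, q] := affineIndependent_of_ne_of_notMem_of_mem_of_mem hpq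
    hy (left_mem_affineSpan_pair ℝ p q) (right_mem_affineSpan_pair ℝ p q)
  rw [affineIndependent_iff_linearIndependent_vsub ℝ _ 0,
    ← linearIndependent_equiv (finSuccAboveEquiv (0 : Fin 3))] at hind
  refine segment_inter_subset_endpoint_of_linearIndependent_sub ℝ ?_
  convert hind using 1
  ext i
  fin_cases i <;> rfl

end NormedSpace

section Plane

-- Otherwise `z - p` has a logarithm around `frontier (Q ∪ G) ⊆ closure G` for some `p ∈ Q \ V`.
lemma subset_of_isCompact_of_isOpen_union {V G Q : Set ℂ} (hV : IsSimplyConnected V)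
    (hVo : IsOpen V) (hG : Bornology.IsBounded G) (hGV : closure G ⊆ V) (hQ : IsCompact Q)
    (hQG : IsOpen (Q ∪ G)) : Q ⊆ V := by
  intro p hpQ
  by_contra hpV
  have hlog : HasContinuousLogOn (fun z => z - p) V :=
    hasContinuousLogOn_of_isSimplyConnected hV hVo (by fun_prop) fun z hz =>
      sub_ne_zero.2 (ne_of_mem_of_not_mem hz hpV)
  have hfrontier : frontier (Q ∪ G) ⊆ V := fun z hz => by
    rw [hQG.frontier_eq, closure_union, hQ.isClosed.closure_eq] at hz
    exact hGV (hz.1.resolve_left fun hzQ => hz.2 (Or.inl hzQ))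
  refine not_hasContinuousLogOn_frontier (g := 1) (hQ.isBounded.union hG) (Or.inl hpQ)
    continuousOn_const (fun _ _ => one_ne_zero) ((hlog.mono hfrontier).congr fun z _ => ?_)
  simp

variable {E : Type*} [NormedAddCommGroup E] [NormedSpace ℝ E] {f : ℂ → E} {U V R : Set ℂ}

-- A compact piece `Q` cut off by the preimage `G` lies in `V`, and the values of `f` on `Q ∪ G`
-- satisfy the maximum principle, so they stay in `N`; hence `Q` is isolated from `G`.
lemma isPreconnected_compl_inter_preimage_of_starConvex {N : Set E} {y : E}
    (hV : IsSimplyConnected V) (hVo : IsOpen V) (hUV : U ⊆ V) (hcont : ContinuousOn f V)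
    (hopen : ∀ Q ⊆ V, IsOpen Q → IsOpen (f '' Q)) (hU : IsProperOpenOver f U (closure N))
    (hN : IsOpen N) (hstar : StarConvex ℝ y N) (hy : y ∈ N) : IsPreconnected (U ∩ f ⁻¹' N)ᶜ := by
  set G := U ∩ f ⁻¹' N
  have hGU : closure G ⊆ U := hU.closure_inter_preimage_subset.trans inter_subset_left
  have hG : Bornology.IsBounded G :=
    hU.isCompact_closure.isBounded.subset (subset_closure.trans (hGU.trans subset_closure))
  refine isPreconnected_compl_of_forall_isCompact (by simp) (hU.isOpen_inter_preimage hN) hG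
    fun Q hQ hdisj hQG => ?_
  have hQV : Q ⊆ V := subset_of_isCompact_of_isOpen_union hV hVo hG (hGU.trans hUV) hQ hQG
  have hsdiff : f '' (Q ∪ G) \ N = f '' Q \ N := by
    rw [image_union, union_sdiff_distrib, sdiff_eq_empty.2 (image_subset_iff.2 inter_subset_right),
      union_empty]
  have hQN : f '' (Q ∪ G) ⊆ N := by
    refine subset_of_isCompact_sdiff_of_starConvex
      (hopen _ (union_subset hQV (inter_subset_left.trans hUV)) hQG) hstar hy ?_
    exact hsdiff ▸ (hQ.image_of_continuousOn (hcont.mono hQV)).diff hN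
  have hQU : Disjoint Q U := disjoint_left.2 fun z hzQ hzU =>
    disjoint_left.1 hdisj hzQ ⟨hzU, hQN (mem_image_of_mem f (Or.inl hzQ))⟩
  have hQo : IsOpen Q := by
    have hQ_eq : Q = (Q ∪ G) \ closure G := by
      rw [union_sdiff_distrib, sdiff_eq_empty.2 subset_closure, union_empty,
        (hQU.mono_right hGU).sdiff_eq_left]
    exact hQ_eq ▸ hQG.sdiff isClosed_closure
  exact (isClopen_iff.1 ⟨hQ.isClosed, hQo⟩).resolve_right hQ.ne_univ

variable {x₀ x₁ : ℂ}

lemma isPreconnected_inter_preimage_inter {N₁ N₂ : Set E} {y : E}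
    (hV : IsSimplyConnected V) (hVo : IsOpen V) (hUV : U ⊆ V) (hcont : ContinuousOn f V)
    (hopen : ∀ Q ⊆ V, IsOpen Q → IsOpen (f '' Q)) (hRU : R ⊆ U)
    (hU : IsNormalNhd f x₀ U (closure (N₁ ∪ N₂))) (hx₀ : f x₀ ∈ N₁)
    (hR : IsNormalNhd f x₁ R N₂) (ho₁ : IsOpen N₁) (ho₂ : IsOpen N₂) (hc₁ : Convex ℝ N₁)
    (hc₂ : Convex ℝ N₂) (hy₁ : y ∈ N₁) (hy₂ : y ∈ N₂) :
    IsPreconnected (R ∩ f ⁻¹' (N₁ ∩ N₂)) := by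
  set G₁ := U ∩ f ⁻¹' N₁
  set G₂ := R ∩ f ⁻¹' N₂
  set G₃ := (U \ closure R) ∩ f ⁻¹' N₂
  have hU₁ : IsNormalNhd f x₀ U N₁ := hU.mono (subset_union_left.trans subset_closure) hx₀
  have hU₂ : IsProperOpenOver f U N₂ :=
    hU.toIsProperOpenOver.mono (subset_union_right.trans subset_closure)
  have hsdiff : IsProperOpenOver f (U \ closure R) N₂ := hU₂.sdiff_closure hR.toIsProperOpenOver
  have hG₁₃ : IsPreconnected (G₁ ∪ G₃) :=
    hsdiff.isPreconnected_union hc₂.isPreconnected ho₂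
      (hU₁.isPreconnected_inter_preimage hc₁.isPreconnected ho₁) hy₂
      (inter_subset_inter sdiff_subset (preimage_mono (singleton_subset_iff.2 hy₁)))
  have hunion : G₁ ∪ G₃ ∪ G₂ = U ∩ f ⁻¹' (N₁ ∪ N₂) := by
    ext z
    have hzU : z ∈ R → z ∈ U := fun hz => hRU hz
    have hzR : z ∈ closure R → f z ∈ N₂ → z ∈ R := hR.mem_of_mem_closure z
    simp only [G₁, G₂, G₃, mem_union, mem_inter_iff, mem_preimage, Set.mem_sdiff]
    tauto
  have hinter : (G₁ ∪ G₃) ∩ G₂ = R ∩ f ⁻¹' (N₁ ∩ N₂) := by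
    ext z
    have hzU : z ∈ R → z ∈ U := fun hz => hRU hz
    have hzR : z ∈ R → z ∈ closure R := fun hz => subset_closure hz
    simp only [G₁, G₂, G₃, mem_union, mem_inter_iff, mem_preimage, Set.mem_sdiff]
    tauto
  rw [← hinter]
  refine isPreconnected_inter_of_isPreconnected_compl_union hG₁₃
    (hR.isPreconnected_inter_preimage hc₂.isPreconnected ho₂)
    ((hU₁.isOpen_inter_preimage ho₁).union (hsdiff.isOpen_inter_preimage ho₂))
    (hR.isOpen_inter_preimage ho₂) ?_ ?_
  · exact hunion ▸ isPreconnected_compl_inter_preimage_of_starConvex hV hVo hUV hcont hopen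
      hU.toIsProperOpenOver (ho₁.union ho₂) ((hc₁.starConvex hy₁).union (hc₂.starConvex hy₂))
      (Or.inl hy₁)
  · exact hR.isCompact_closure.isBounded.subset
      (inter_subset_right.trans (inter_subset_left.trans subset_closure))

variable {B N : Set E}

-- The preimage of a neighbourhood of `{f a}` is connected, so it cannot leave the normal
-- neighbourhood of `a`.
lemma eq_of_map_eq_of_segment_inter_subset {a b : ℂ}
    (hV : IsSimplyConnected V) (hVo : IsOpen V) (hUV : U ⊆ V) (hcont : ContinuousOn f V)
    (hopen : ∀ Q ⊆ V, IsOpen Q → IsOpen (f '' Q)) (hRU : R ⊆ U) (hU : IsNormalNhd f x₀ U B)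
    (hR : IsNormalNhd f x₁ R N) (hBo : IsOpen B) (hNo : IsOpen N) (hB : Convex ℝ B)
    (hN : Convex ℝ N) (hNB : N ⊆ B) (ha : a ∈ R ∩ f ⁻¹' N) (hb : b ∈ R) (hab : f a = f b)
    (hdisc : ∀ᶠ z in 𝓝[≠] a, f z ≠ f a)
    (hseg : segment ℝ (f a) (f x₀) ∩ segment ℝ (f a) (f x₁) ⊆ {f a}) : a = b := by
  obtain ⟨Ra, -, Na, hNao, hRa⟩ :=
    exists_isNormalNhd_of_eventually_ne hVo (hUV (hRU ha.1)) hcont hopen hdisc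
  obtain ⟨N₁, N₂, ⟨ho₁, hc₁, hK₁, hN₁⟩, ⟨ho₂, hc₂, hK₂, hN₂⟩, hNa⟩ :=
    exists_convex_nhdsSet_inter_subset (isCompact_segment (f a) (f x₀))
      (isCompact_segment (f a) (f x₁)) (convex_segment _ _) (convex_segment _ _)
      (hBo.mem_nhdsSet.2 (hB.segment_subset (hNB ha.2) hU.map_mem))
      (hNo.mem_nhdsSet.2 (hN.segment_subset ha.2 hR.map_mem))
      (hNao.mem_nhdsSet.2 (hseg.trans (singleton_subset_iff.2 hRa.map_mem)))
  have hy₁ : f a ∈ N₁ := hK₁ (left_mem_segment ℝ _ _)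
  have hy₂ : f a ∈ N₂ := hK₂ (left_mem_segment ℝ _ _)
  have hx₀ : f x₀ ∈ N₁ := hK₁ (right_mem_segment ℝ _ _)
  have hNN : closure (N₁ ∪ N₂) ⊆ B :=
    closure_union.subset.trans (union_subset hN₁ (hN₂.trans hNB))
  have hpre : IsPreconnected (R ∩ f ⁻¹' (N₁ ∩ N₂)) :=
    isPreconnected_inter_preimage_inter hV hVo hUV hcont hopen hRU
      (hU.mono hNN (subset_closure (Or.inl hx₀))) hx₀
      (hR.mono (subset_closure.trans hN₂) (hK₂ (right_mem_segment ℝ _ _)))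
      ho₁ ho₂ hc₁ hc₂ hy₁ hy₂
  have hsub : R ∩ f ⁻¹' (N₁ ∩ N₂) ⊆ Ra :=
    hRa.subset_of_isPreconnected hpre (fun z hz => hNa hz.2) ⟨a, ⟨ha.1, hy₁, hy₂⟩, hRa.mem⟩
  have hbRa : b ∈ Ra := hsub ⟨hb, by rw [mem_preimage, ← hab]; exact ⟨hy₁, hy₂⟩⟩
  exact (hRa.fiber_subset ⟨hbRa, hab.symm⟩).symm

-- By openness, a common value of two distinct points can be moved off the line through `f x₀` and
-- `f x₁`.
lemma injOn_inter_preimage_of_isNormalNhd (hE : 1 < Module.rank ℝ E)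
    (hV : IsSimplyConnected V) (hVo : IsOpen V) (hUV : U ⊆ V) (hcont : ContinuousOn f V)
    (hopen : ∀ Q ⊆ V, IsOpen Q → IsOpen (f '' Q)) (hdisc : ∀ a ∈ R, ∀ᶠ z in 𝓝[≠] a, f z ≠ f a)
    (hRU : R ⊆ U) (hU : IsNormalNhd f x₀ U B) (hR : IsNormalNhd f x₁ R N) (hBo : IsOpen B)
    (hNo : IsOpen N) (hB : Convex ℝ B) (hN : Convex ℝ N) (hNB : N ⊆ B) (hne : x₁ ≠ x₀) :
    InjOn f (R ∩ f ⁻¹' N) := by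
  intro a ha b hb hab
  by_contra hne_ab
  obtain ⟨A, A', hA, hA', haA, hbA', hdisj⟩ := t2_separation hne_ab
  have himage : ∀ {A}, IsOpen A → IsOpen (f '' (A ∩ (R ∩ f ⁻¹' N))) := fun hA =>
    hR.isOpen_image _ (inter_subset_right.trans inter_subset_left)
      (hA.inter (hR.isOpen_inter_preimage hNo))
  obtain ⟨_, ⟨⟨a', ha', rfl⟩, b', hb', hab'⟩, hline⟩ :=
    exists_mem_notMem_line hE (f x₀) (f x₁) ((himage hA).inter (himage hA'))
      ⟨f a, ⟨a, ⟨haA, ha⟩, rfl⟩, b, ⟨hbA', hb⟩, hab.symm⟩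
  have hfx : f x₀ ≠ f x₁ := fun h => hne (hU.fiber_subset ⟨hRU hR.mem, h.symm⟩)
  have heq : a' = b' := eq_of_map_eq_of_segment_inter_subset hV hVo hUV hcont hopen hRU hU hR
    hBo hNo hB hN hNB ha'.2 hb'.2.1 hab'.symm (hdisc a' ha'.2.1)
    (segment_inter_segment_subset_of_notMem_line hfx hline)
  exact disjoint_left.1 hdisj ha'.1 (heq ▸ hb'.1)

lemma notMem_branchSet_of_injOn {f : ℂ → ℂ} {Ω W : Set ℂ} {x : ℂ} (hW : IsOpen W) (hx : x ∈ W)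
    (hWΩ : W ⊆ Ω) (hcont : ContinuousOn f W) (hopen : ∀ Q ⊆ W, IsOpen Q → IsOpen (f '' Q))
    (hinj : InjOn f W) : x ∉ branchSet f Ω := by
  have hrestrict : IsOpenMap (W.domRestrict f) := fun T hT => by
    rw [domRestrict_eq, image_comp]
    exact hopen _ (Subtype.coe_image_subset W T) (hW.isOpenMap_subtype_val T hT)
  exact fun hbranch => hbranch.2 ⟨W, hW, hx, hWΩ,
    PartialHomeomorph.ofContinuousOpenRestrict (hinj.toPartialEquiv f W) hcont hrestrict,
    rfl, fun _ _ => rfl⟩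

lemma notMem_branchSet_of_mem_isNormalNhd {f : ℂ → ℂ} {Ω B : Set ℂ} (hV : IsSimplyConnected V)
    (hVo : IsOpen V) (hVΩ : V ⊆ Ω) (hUV : U ⊆ V) (hcont : ContinuousOn f V)
    (hopen : ∀ Q ⊆ V, IsOpen Q → IsOpen (f '' Q)) (hdisc : ∀ a ∈ V, ∀ᶠ z in 𝓝[≠] a, f z ≠ f a)
    (hU : IsNormalNhd f x₀ U B) (hBo : IsOpen B) (hB : Convex ℝ B) (hx₁ : x₁ ∈ U)
    (hfx₁ : f x₁ ∈ B) (hne : x₁ ≠ x₀) : x₁ ∉ branchSet f Ω := by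
  obtain ⟨R, hRU, N, hNo, hR⟩ := exists_isNormalNhd_of_eventually_ne hU.isOpen hx₁
    (hU.continuousOn.mono subset_closure) hU.isOpen_image (hdisc x₁ (hUV hx₁))
  obtain ⟨ε, hε, hball⟩ := Metric.isOpen_iff.1 (hNo.inter hBo) (f x₁) ⟨hR.map_mem, hfx₁⟩
  have hRε : IsNormalNhd f x₁ R (ball (f x₁) ε) :=
    hR.mono (hball.trans inter_subset_left) (mem_ball_self hε)
  have hRV : R ⊆ V := hRU.trans hUV
  have hWV : R ∩ f ⁻¹' ball (f x₁) ε ⊆ V := inter_subset_left.trans hRV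
  refine notMem_branchSet_of_injOn (hR.isOpen_inter_preimage isOpen_ball) ⟨hR.mem, hRε.map_mem⟩
    (hWV.trans hVΩ) (hcont.mono hWV) (fun Q hQ => hopen Q (hQ.trans hWV)) ?_
  exact injOn_inter_preimage_of_isNormalNhd (by simp) hV hVo hUV hcont hopen
    (fun a ha => hdisc a (hRV ha)) hRU hU hRε hBo isOpen_ball hB (convex_ball _ _)
    (hball.trans inter_subset_right) hne

end Plane

/-- Let `f` be a continuous, open, discrete map on a planar domain `Ω`, let `x₀ ∈ Ω`
and let `r > 0` be so small that `U₀ := U(x₀,f,r)` is a normal neighbourhood of `x₀`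
contained in a simply connected open subset of `Ω`. Then `U₀ ∩ B_f ⊆ {x₀}`. -/
theorem branch_set_in_normal_neighbourhood
    (Ω : Set ℂ) (hΩopen : IsOpen Ω) (hΩconn : IsConnected Ω)
    (f : ℂ → ℂ)
    (hcont : ContinuousOn f Ω)
    (hopen : ∀ V : Set ℂ, V ⊆ Ω → IsOpen V → IsOpen (f '' V))
    (hdisc : ∀ y : ℂ, ∀ x ∈ Ω ∩ f ⁻¹' {y},
      ∃ V : Set ℂ, IsOpen V ∧ x ∈ V ∧ V ∩ (Ω ∩ f ⁻¹' {y}) = {x})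
    (x₀ : ℂ) (hx₀ : x₀ ∈ Ω) (r : ℝ) (hr : 0 < r)
    (U₀ : Set ℂ)
    (hU₀def : U₀ = connectedComponentIn (Ω ∩ f ⁻¹' Metric.ball (f x₀) r) x₀)
    (hU₀cpt : IsCompact (closure U₀)) (hU₀cl : closure U₀ ⊆ Ω)
    (hU₀normal : f '' frontier U₀ = frontier (f '' U₀))
    (hU₀nbhd : closure U₀ ∩ f ⁻¹' {f x₀} = {x₀})
    (hU₀sc : ∃ V : Set ℂ, IsOpen V ∧ SimplyConnectedSpace V ∧ U₀ ⊆ V ∧ V ⊆ Ω) :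
    U₀ ∩ branchSet f Ω ⊆ {x₀} := by
  subst hU₀def
  set U₀ := connectedComponentIn (Ω ∩ f ⁻¹' ball (f x₀) r) x₀
  obtain ⟨V, hVo, hV, hUV, hVΩ⟩ := hU₀sc
  have hisolated : ∀ a ∈ Ω, ∀ᶠ z in 𝓝[≠] a, f z ≠ f a := fun a ha =>
    let ⟨W, hW, haW, hfiber⟩ := hdisc (f a) a ⟨ha, rfl⟩
    eventually_ne_of_inter_fiber_eq_singleton hΩopen ha hW haW hfiber
  have hU : IsNormalNhd f x₀ U₀ (ball (f x₀) r) :=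
    { toIsProperOpenOver := isProperOpenOver_connectedComponentIn hΩopen hcont hopen isOpen_ball
        hU₀cpt hU₀cl
      mem := mem_connectedComponentIn ⟨hx₀, mem_ball_self hr⟩
      map_mem := mem_ball_self hr
      fiber_subset := (inter_subset_inter_left _ subset_closure).trans hU₀nbhd.subset }
  rintro x₁ ⟨hx₁, hbranch⟩
  by_contra hne
  exact notMem_branchSet_of_mem_isNormalNhd hV hVo hVΩ hUV (hcont.mono hVΩ)
    (fun Q hQ => hopen Q (hQ.trans hVΩ)) (fun a ha => hisolated a (hVΩ ha)) hU isOpen_ball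
    (convex_ball _ _) hx₁ (connectedComponentIn_subset _ _ hx₁).2 hne hbranch
end

section
/- Let Ω ⊆ ℂ be a domain, f : Ω → ℂ a continuous, open, and discrete map, let z ∈ Ω, and let r > 0 be so small that U := U(z,f,r), the connected component of f⁻¹(B(f(z),r)) containing z, is a normal neighborhood of z whose branch set satisfies U ∩ B_f ⊆ {z}. Set U' := U \ {z} and B' := B(f(z),r) \ {f(z)}. Then the restriction f|_{U'} : U' → B' is a covering map. -/
/-!
The component `U` is relatively closed in `Ω ∩ f⁻¹(B)`, where `B = B(f(z), r)`, so
`U' = closure U ∩ f⁻¹(B')`. The map `f` is proper on the compact set `closure U`, and properness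
survives restriction to the full preimage of `B'`; so `f : U' → B'` is proper. It is also open
and, away from the branch set, locally injective, hence a local homeomorphism. Its fibres are
compact and discrete, thus finite, and a closed local homeomorphism with finite fibres is a
covering map.
-/

open Set

section

variable {X Y : Type*} [TopologicalSpace X] {f : X → Y}

theorem closure_connectedComponentIn_inter (F : Set X) (x : X) :
    closure (connectedComponentIn F x) ∩ F = connectedComponentIn F x := by
  refine Subset.antisymm ?_ (subset_inter subset_closure (connectedComponentIn_subset F x))
  rcases (connectedComponentIn F x).eq_empty_or_nonempty with hempty | hne
  · simp [hempty]
  have hx : x ∈ F := connectedComponentIn_nonempty_iff.1 hne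
  have hconn : IsPreconnected (closure (connectedComponentIn F x) ∩ F) :=
    isPreconnected_connectedComponentIn.subset_closure
      (subset_inter subset_closure (connectedComponentIn_subset F x)) inter_subset_left
  exact hconn.subset_connectedComponentIn
    ⟨subset_closure (mem_connectedComponentIn hx), hx⟩ inter_subset_right

theorem isLocallyInjective_mapsToRestrict {S : Set X} {T : Set Y}
    (hf : ∀ x ∈ S, ∃ V, IsOpen V ∧ x ∈ V ∧ InjOn f V) (hST : MapsTo f S T) :
    IsLocallyInjective hST.restrict := by
  rintro ⟨x, hx⟩
  obtain ⟨V, hV, hxV, hinj⟩ := hf x hx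
  exact ⟨Subtype.val ⁻¹' V, hV.preimage continuous_subtype_val, hxV, fun a ha b hb hab ↦
    Subtype.ext (hinj ha hb (congrArg Subtype.val hab))⟩

variable [TopologicalSpace Y]

theorem isProperMap_mapsToRestrict [T2Space Y] {K S : Set X} {T : Set Y} (hK : IsCompact K)
    (hf : ContinuousOn f K) (hS : S = K ∩ f ⁻¹' T) (hST : MapsTo f S T) :
    IsProperMap hST.restrict := by
  have : CompactSpace K := isCompact_iff_compactSpace.1 hK
  have hproper : IsProperMap (T.restrictPreimage (K.domRestrict f)) :=
    hf.domRestrict.isProperMap.restrictPreimage T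
  subst hS
  let toPreimage : ↥(K ∩ f ⁻¹' T) ≃ₜ ↥(K.domRestrict f ⁻¹' T) :=
    { toFun := fun x ↦ ⟨⟨x, x.2.1⟩, x.2.2⟩
      invFun := fun x ↦ ⟨x, x.1.2, x.2⟩
      left_inv := fun _ ↦ rfl
      right_inv := fun _ ↦ rfl }
  exact hproper.comp toPreimage.isProperMap

theorem isOpenMap_mapsToRestrict {S : Set X} {T : Set Y} (hS : IsOpen S)
    (hf : ∀ V ⊆ S, IsOpen V → IsOpen (f '' V)) (hST : MapsTo f S T) :
    IsOpenMap hST.restrict := by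
  have hdom : IsOpenMap (S.domRestrict f) := fun O hO ↦ by
    rw [domRestrict_eq, image_comp]
    exact hf _ (Subtype.coe_image_subset S O) (hS.isOpenMap_subtype_val O hO)
  exact hdom.codRestrict fun x ↦ hST x.2

theorem isLocalHomeomorph_of_isOpenMap_of_isLocallyInjective (hcont : Continuous f)
    (hopen : IsOpenMap f) (hinj : IsLocallyInjective f) : IsLocalHomeomorph f := by
  rw [isLocalHomeomorph_iff_isOpenEmbedding_restrict]
  intro x
  obtain ⟨V, hV, hxV, hinjV⟩ := hinj x
  exact ⟨V, hV.mem_nhds hxV, .of_continuous_injective_isOpenMap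
    hcont.continuousOn.domRestrict hinjV.injective (hopen.domRestrict hV)⟩

theorem isCoveringMap_of_isProperMap_of_isLocalHomeomorph [T2Space X] (hproper : IsProperMap f)
    (hlocal : IsLocalHomeomorph f) : IsCoveringMap f := by
  have hdiscrete (y : Y) : IsDiscrete (f ⁻¹' {y}) :=
    .of_openPartialHomeomorph f subset_rfl fun x _ ↦
      (hlocal x).imp fun _ h ↦ ⟨h.1, h.2.symm⟩
  have hfinite (y : Y) : (f ⁻¹' {y}).Finite :=
    (hproper.isCompact_preimage isCompact_singleton).finite (hdiscrete y)
  exact isCoveringMap_iff_isCoveringMapOn_univ.2 <|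
    hproper.isClosedMap.isCoveringMapOn_of_isLocalHomeomorphOn (fun y _ ↦ hfinite y)
      hlocal.isLocalHomeomorphOn

theorem punctured_restriction_is_covering_map_general [T2Space X] [LocallyConnectedSpace X]
    [T2Space Y] {Ω U : Set X} {B : Set Y} {z : X} (hΩ : IsOpen Ω) (hB : IsOpen B)
    (hcont : ContinuousOn f Ω) (hopen : ∀ V ⊆ Ω, IsOpen V → IsOpen (f '' V))
    (hU : U = connectedComponentIn (Ω ∩ f ⁻¹' B) z)
    (hUcpt : IsCompact (closure U)) (hUcl : closure U ⊆ Ω)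
    (hinj : ∀ x ∈ U \ {z}, ∃ V, IsOpen V ∧ x ∈ V ∧ InjOn f V)
    (hmaps : MapsTo f (U \ {z}) (B \ {f z})) :
    IsCoveringMap hmaps.restrict := by
  have hUopen : IsOpen U := hU ▸ (hcont.isOpen_inter_preimage hΩ hB).connectedComponentIn
  have hUΩ : U \ {z} ⊆ Ω := sdiff_subset.trans (subset_closure.trans hUcl)
  have hU' : U \ {z} = closure U ∩ f ⁻¹' (B \ {f z}) := by
    refine Subset.antisymm (fun x hx ↦ ⟨subset_closure hx.1, hmaps hx⟩) ?_
    rintro x ⟨hxU, hxB, hxz⟩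
    have hx : x ∈ closure U ∩ (Ω ∩ f ⁻¹' B) := ⟨hxU, hUcl hxU, hxB⟩
    rw [hU, closure_connectedComponentIn_inter, ← hU] at hx
    exact ⟨hx, fun hxz' ↦ hxz (congrArg f hxz')⟩
  have hproper : IsProperMap hmaps.restrict :=
    isProperMap_mapsToRestrict hUcpt (hcont.mono hUcl) hU' hmaps
  have hopenMap : IsOpenMap hmaps.restrict :=
    isOpenMap_mapsToRestrict (hUopen.sdiff isClosed_singleton)
      (fun V hV ↦ hopen V (hV.trans hUΩ)) hmaps
  exact isCoveringMap_of_isProperMap_of_isLocalHomeomorph hproper <|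
    isLocalHomeomorph_of_isOpenMap_of_isLocallyInjective hproper.continuous hopenMap <|
      isLocallyInjective_mapsToRestrict hinj hmaps

end

theorem exists_isOpen_injOn_of_notMem_branchSet {f : ℂ → ℂ} {Ω : Set ℂ} {x : ℂ} (hx : x ∈ Ω)
    (hxf : x ∉ branchSet f Ω) : ∃ V, IsOpen V ∧ x ∈ V ∧ InjOn f V := by
  obtain ⟨V, hV, hxV, -, e, rfl, hfe⟩ := not_not.1 fun h ↦ hxf ⟨hx, h⟩
  exact ⟨e.source, hV, hxV, hfe.injOn_iff.2 e.injOn⟩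

/-- Let `f` be a continuous, open, discrete map on a planar domain `Ω`, `z ∈ Ω`, and
`r > 0` so small that `U := U(z,f,r)` is a normal neighbourhood of `z` with
`U ∩ B_f ⊆ {z}`. Then the restriction of `f` to `U' := U \ {z}` is a covering map
onto `B' := B(f(z),r) \ {f(z)}`. -/
theorem punctured_restriction_is_covering_map
    (Ω : Set ℂ) (hΩopen : IsOpen Ω) (hΩconn : IsConnected Ω)
    (f : ℂ → ℂ)
    (hcont : ContinuousOn f Ω)
    (hopen : ∀ V : Set ℂ, V ⊆ Ω → IsOpen V → IsOpen (f '' V))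
    (hdisc : ∀ y : ℂ, ∀ x ∈ Ω ∩ f ⁻¹' {y},
      ∃ V : Set ℂ, IsOpen V ∧ x ∈ V ∧ V ∩ (Ω ∩ f ⁻¹' {y}) = {x})
    (z : ℂ) (hz : z ∈ Ω) (r : ℝ) (hr : 0 < r)
    (U : Set ℂ)
    (hUdef : U = connectedComponentIn (Ω ∩ f ⁻¹' Metric.ball (f z) r) z)
    (hUcpt : IsCompact (closure U)) (hUcl : closure U ⊆ Ω)
    (hUnormal : f '' frontier U = frontier (f '' U))
    (hUnbhd : closure U ∩ f ⁻¹' {f z} = {z})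
    (hUbranch : U ∩ branchSet f Ω ⊆ {z})
    (hmaps : Set.MapsTo f (U \ {z}) (Metric.ball (f z) r \ {f z})) :
    IsCoveringMap (Set.MapsTo.restrict f (U \ {z}) (Metric.ball (f z) r \ {f z}) hmaps) :=
  punctured_restriction_is_covering_map_general hΩopen Metric.isOpen_ball hcont hopen hUdef hUcpt
    hUcl (fun _ hx ↦ exists_isOpen_injOn_of_notMem_branchSet (hUcl (subset_closure hx.1))
      fun hxf ↦ hx.2 (hUbranch ⟨hx.1, hxf⟩)) hmaps
end
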